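/- Let C be a linear code, i.e. an F_2-linear subspace of F_2^n, and let C^⊥ = {y ∈ F_2^n : x·y = 0 for all x ∈ C} be its dual code (with x·y = Σ_i x_i y_i in F_2). Let A_w(C) denote the number of codewords of C of Hamming weight w, and let K_k(w) = Σ_{i=0}^{w} (−1)^i C(w, i) C(n−w, k−i) be the binary Krawtchouk polynomial values. Then the MacWilliams identity holds: for every 0 ≤ k ≤ n, A_k(C^⊥) = (1/|C|) · Σ_{w=0}^{n} A_w(C) · K_k(w). -/

import Mathlib

/-- The value `K_k(w)` of the binary Krawtchouk polynomial of degree `k` and parameter `n`. -/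
def kraw (n k w : ℕ) : ℤ :=
  ∑ i ∈ Finset.range (w + 1),
    if i ≤ k then (-1 : ℤ) ^ i * (w.choose i) * ((n - w).choose (k - i)) else 0

/-- `A_w(S)`: the number of words of Hamming weight `w` in a set `S ⊆ F_2^n`. -/
noncomputable def wtCount (n : ℕ) (S : Set (Fin n → ZMod 2)) (w : ℕ) : ℕ :=
  Nat.card {x : Fin n → ZMod 2 // x ∈ S ∧ hammingNorm x = w}

/-- The dual code `C^⊥ = {y : x·y = 0 for all x ∈ C}` of a linear binary code `C`. -/
def dualCode (n : ℕ) (C : Submodule (ZMod 2) (Fin n → ZMod 2)) : Set (Fin n → ZMod 2) :=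
  {y | ∀ x ∈ C, ∑ i, x i * y i = 0}

/-- The nontrivial sign character of `ZMod 2`. -/
def sgn2 (a : ZMod 2) : ℤ := if a = 0 then 1 else -1

lemma sgn2_add (a b : ZMod 2) : sgn2 (a + b) = sgn2 a * sgn2 b := by
  revert a b; decide

lemma sgn2_sum {n : ℕ} (f : Fin n → ZMod 2) : sgn2 (∑ i, f i) = ∏ i, sgn2 (f i) := by
  induction n with
  | zero => simp [sgn2]
  | succ n ih => rw [Fin.sum_univ_succ, Fin.prod_univ_succ, sgn2_add, ih]

open Polynomial in
lemma coeff_one_sub_pow (w i : ℕ) :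
    ((1 - X : ℤ[X]) ^ w).coeff i = (-1) ^ i * (w.choose i) := by
  have h : (1 - X : ℤ[X]) ^ w = ((1 + X : ℤ[X]) ^ w).comp (C (-1) * X) := by
    simp [sub_eq_add_neg]
  rw [h, comp_C_mul_X_coeff, coeff_one_add_X_pow, mul_comm]

open Polynomial in
lemma kraw_eq_coeff (n k w : ℕ) :
    kraw n k w = ((1 - X : ℤ[X]) ^ w * (1 + X) ^ (n - w)).coeff k := by
  rw [coeff_mul, Finset.Nat.sum_antidiagonal_eq_sum_range_succ_mk]
  simp only [coeff_one_sub_pow, coeff_one_add_X_pow]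
  unfold kraw
  rw [← Finset.sum_filter]
  have h1 : (Finset.range (w + 1)).filter (fun i => i ≤ k) ⊆ Finset.range (k + 1) := by
    intro i hi
    simp at hi ⊢
    omega
  apply Finset.sum_subset h1
  intro i hi hi'
  simp at hi hi'
  rw [Nat.choose_eq_zero_of_lt (by omega : w < i)]
  simp

open Polynomial in
lemma sum_char_eq_kraw (n k : ℕ) (x : Fin n → ZMod 2) :
    (∑ y : Fin n → ZMod 2, if hammingNorm y = k then sgn2 (∑ i, x i * y i) else 0)
      = kraw n k (hammingNorm x) := by
  have key : (∏ i, ∑ a : ZMod 2, C (sgn2 (x i * a)) * (if a ≠ 0 then (X : ℤ[X]) else 1))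
      = ∑ y : Fin n → ZMod 2, C (sgn2 (∑ i, x i * y i)) * X ^ hammingNorm y := by
    rw [Finset.prod_univ_sum, Fintype.piFinset_univ]
    refine Finset.sum_congr rfl fun y _ => ?_
    rw [Finset.prod_mul_distrib, sgn2_sum, map_prod, Finset.prod_ite]
    simp [hammingNorm]
  have key2 : (∏ i, ∑ a : ZMod 2, C (sgn2 (x i * a)) * (if a ≠ 0 then (X : ℤ[X]) else 1))
      = (1 - X) ^ hammingNorm x * (1 + X) ^ (n - hammingNorm x) := by
    have h : ∀ b : ZMod 2,
        (∑ a : ZMod 2, C (sgn2 (b * a)) * (if a ≠ 0 then (X : ℤ[X]) else 1))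
          = if b ≠ 0 then 1 - X else 1 + X := by
      intro b
      have hs : ∀ f : ZMod 2 → ℤ[X], ∑ a, f a = f 0 + f 1 := fun f => Fin.sum_univ_two f
      rw [hs]
      by_cases hb : b = 0
      · simp [hb, sgn2]
      · simp [hb, sgn2, sub_eq_add_neg]
    simp only [h]
    rw [Finset.prod_ite, Finset.prod_const, Finset.prod_const]
    have hc := Finset.card_filter_add_card_filter_not (s := (Finset.univ : Finset (Fin n)))
      (fun i => x i ≠ 0)
    rw [Finset.card_univ, Fintype.card_fin] at hc
    unfold hammingNorm
    congr 2
    omega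
  rw [kraw_eq_coeff, ← key2, key, finsetSum_coeff]
  refine Finset.sum_congr rfl fun y _ => ?_
  rw [coeff_C_mul, coeff_X_pow]
  simp [eq_comm]

open Classical in
lemma sum_code_char (n : ℕ) (C : Submodule (ZMod 2) (Fin n → ZMod 2)) (y : Fin n → ZMod 2) :
    (∑ x : C, sgn2 (∑ i, (x : Fin n → ZMod 2) i * y i))
      = if y ∈ dualCode n C then (Nat.card C : ℤ) else 0 := by
  split_ifs with h
  · rw [Finset.sum_congr rfl (fun (x : C) _ => by rw [h x x.2])]
    simp [sgn2]
  · simp only [dualCode, Set.mem_ofPred_eq, not_forall] at h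
    obtain ⟨z, hz, hne⟩ := h
    have e := Equiv.sum_comp (Equiv.addRight (⟨z, hz⟩ : C))
      (fun x : C => sgn2 (∑ i, (x : Fin n → ZMod 2) i * y i))
    have hs : sgn2 (∑ i, z i * y i) = -1 := by simp [sgn2, hne]
    simp only [Equiv.coe_addRight, Submodule.coe_add, Pi.add_apply, add_mul,
      Finset.sum_add_distrib, sgn2_add, hs] at e
    rw [← Finset.sum_mul] at e
    linarith

open Classical in
lemma wtCount_eq (n : ℕ) (S : Set (Fin n → ZMod 2)) (w : ℕ) :
    (wtCount n S w : ℤ) = ∑ x : Fin n → ZMod 2, if x ∈ S ∧ hammingNorm x = w then 1 else 0 := by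
  unfold wtCount
  rw [Nat.card_eq_fintype_card, Fintype.card_subtype]
  simp

open Classical in
lemma macwilliams_int (n : ℕ) (C : Submodule (ZMod 2) (Fin n → ZMod 2)) (k : ℕ) :
    (Nat.card C : ℤ) * wtCount n (dualCode n C) k =
      ∑ w ∈ Finset.range (n + 1), (wtCount n (C : Set (Fin n → ZMod 2)) w : ℤ) * kraw n k w := by
  have h1 : (Nat.card C : ℤ) * wtCount n (dualCode n C) k
      = ∑ x : C, kraw n k (hammingNorm (x : Fin n → ZMod 2)) := by
    simp only [← sum_char_eq_kraw]
    rw [Finset.sum_comm, wtCount_eq, Finset.mul_sum]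
    refine Finset.sum_congr rfl fun y _ => ?_
    by_cases hy : hammingNorm y = k
    · simp only [hy, if_true, and_true, sum_code_char, mul_ite, mul_one, mul_zero]
    · simp [hy]
  rw [h1]
  simp only [wtCount_eq, Finset.sum_mul]
  rw [Finset.sum_comm]
  have h2 : ∀ f : (Fin n → ZMod 2) → ℤ, ∑ x : C, f x = ∑ x, if x ∈ C then f x else 0 := by
    intro f
    rw [← Finset.sum_filter]
    exact (Finset.sum_subtype _ (by simp) f).symm
  rw [h2 (fun x => kraw n k (hammingNorm x))]
  refine Finset.sum_congr rfl fun x _ => ?_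
  by_cases hx : x ∈ C
  · have hle : hammingNorm x < n + 1 := by
      have := hammingNorm_le_card_fintype (x := x)
      simp at this
      omega
    simp [hx, hle]
  · simp [hx]

/-- the MacWilliams identity: for a linear binary code `C ⊆ F_2^n` and every
`0 ≤ k ≤ n`, `A_k(C^⊥) = (1/|C|) ∑_{w=0}^{n} A_w(C) K_k(w)`. -/
theorem macwilliams_identity (n : ℕ) (hn : 1 ≤ n)
    (C : Submodule (ZMod 2) (Fin n → ZMod 2)) (k : ℕ) (hk : k ≤ n) :
    (wtCount n (dualCode n C) k : ℝ) =
      (1 / (Nat.card C : ℝ)) *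
        ∑ w ∈ Finset.range (n + 1), (wtCount n (C : Set (Fin n → ZMod 2)) w : ℝ) *
          (kraw n k w : ℝ) := by
  have h := congrArg (Int.cast : ℤ → ℝ) (macwilliams_int n C k)
  push_cast at h
  have hc : (Nat.card C : ℝ) ≠ 0 := by
    exact_mod_cast Nat.card_pos.ne'
  rw [← h]
  field_simp
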